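/- arXiv:1404.3282 — 2 statements merged into one kernel-verified Lean document; each statement's English description precedes it below -/
import Mathlib

section
/- Let K be an imaginary quadratic field, p a prime that splits in K as pO_K = 𝔭·𝔭̄ with 𝔭 ≠ 𝔭̄, r ≥ 1, and 𝔤 = p^r O_K. Let χ be a nonprincipal character of (O_K/𝔤)^× that is trivial on the image of (Z/p^r Z)^×. Then the conductor of χ is divisible by both 𝔭 and 𝔭̄. -/
open NumberField

/-- The conductor of a multiplicative character `χ` of `O_K/𝔤`: the gcd (= ideal sum) of all
nonzero ideals `𝔪` such that `χ(α) = 1` for every `α` with `αO_K` prime to `𝔤` and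
`α ≡ 1 (mod 𝔪)`. -/
noncomputable def charConductor (K : Type*) [Field K] [NumberField K]
    (g : Ideal (𝓞 K)) (χ : MulChar (𝓞 K ⧸ g) ℂ) : Ideal (𝓞 K) :=
  sSup {m : Ideal (𝓞 K) | m ≠ ⊥ ∧ ∀ α : 𝓞 K, IsUnit (Ideal.Quotient.mk g α) →
    α - 1 ∈ m → χ (Ideal.Quotient.mk g α) = 1}

/-!
If `𝔪` is a modulus of `χ` prime to `P`, then `P ^ r + 𝔪 = 1`, so `Q ^ r` is contained in
`𝔪 + (P * Q) ^ r` and is itself a modulus of `χ`: the value of `χ` depends only on the class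
modulo `Q ^ r`. Since `Q` has residue field `𝔽_p` and is unramified over `p`, every class modulo
`Q ^ r` prime to `Q` contains an integer prime to `p`, on which `χ` is trivial. Hence `χ = 1`.
-/

section Modulus

variable {R M : Type*} [CommRing R] [CommMonoidWithZero M] {g : Ideal R}

/-- `m` is a modulus of the character `χ` of `(R ⧸ g)ˣ`: `χ` is trivial on the classes of elements
prime to `g` and congruent to `1` modulo `m`. The conductor is the sum of the nonzero moduli. As
for ray class moduli, `m` is not required to divide `g`. -/
def HasModulus (χ : MulChar (R ⧸ g) M) (m : Ideal R) : Prop :=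
  ∀ α : R, IsUnit (Ideal.Quotient.mk g α) → α - 1 ∈ m → χ (Ideal.Quotient.mk g α) = 1

theorem HasModulus.of_le_sup {χ : MulChar (R ⧸ g) M} {m J : Ideal R} (hm : HasModulus χ m)
    (hJ : J ≤ m ⊔ g) : HasModulus χ J := by
  intro α hα hαJ
  obtain ⟨x, hx, y, hy, hxy⟩ := Submodule.mem_sup.mp (hJ hαJ)
  have hα_eq : Ideal.Quotient.mk g α = Ideal.Quotient.mk g (1 + x) := by
    rw [Ideal.Quotient.eq]
    convert hy using 1
    linear_combination -hxy
  rw [hα_eq] at hα ⊢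
  exact hm _ hα (by simpa only [add_sub_cancel_left] using hx)

theorem HasModulus.apply_eq_of_sub_mem {χ : MulChar (R ⧸ g) M} {m : Ideal R}
    (hm : HasModulus χ m) {α β : R} (hα : IsUnit (Ideal.Quotient.mk g α))
    (hβ : IsUnit (Ideal.Quotient.mk g β)) (hαβ : α - β ∈ m) :
    χ (Ideal.Quotient.mk g α) = χ (Ideal.Quotient.mk g β) := by
  obtain ⟨b, hb⟩ := hβ.exists_right_inv
  obtain ⟨γ, rfl⟩ := Ideal.Quotient.mk_surjective b
  have hγ : IsUnit (Ideal.Quotient.mk g γ) := .of_mul_eq_one_right _ hb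
  have hβγ : β * γ - 1 ∈ g := by rwa [← Ideal.Quotient.eq, map_mul, map_one]
  have hαγ : χ (Ideal.Quotient.mk g (α * γ)) = 1 := by
    refine hm.of_le_sup le_rfl (α * γ) (by simpa only [map_mul] using hα.mul hγ) ?_
    have : α * γ - 1 = (α - β) * γ + (β * γ - 1) := by ring
    rw [this]
    exact Submodule.add_mem_sup (m.mul_mem_right γ hαβ) hβγ
  calc χ (Ideal.Quotient.mk g α)
      = χ (Ideal.Quotient.mk g α * (Ideal.Quotient.mk g β * Ideal.Quotient.mk g γ)) := by
        rw [hb, mul_one]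
    _ = χ (Ideal.Quotient.mk g (α * γ)) * χ (Ideal.Quotient.mk g β) := by
        rw [← map_mul χ, map_mul (Ideal.Quotient.mk g), mul_right_comm, mul_assoc]
    _ = χ (Ideal.Quotient.mk g β) := by rw [hαγ, one_mul]

end Modulus

section Splitting

variable {A R : Type*} [CommRing A] [CommRing R] [Algebra A R] {p : Ideal A} {P Q : Ideal R}

theorem pow_succ_sup_mul_pow_eq_pow (hPQ : IsCoprime P Q) (k : ℕ) :
    Q ^ (k + 1) ⊔ (P * Q) ^ k = Q ^ k := by
  have hQP : Q ⊔ P ^ k = ⊤ := Ideal.isCoprime_iff_sup_eq.mp hPQ.symm.pow_right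
  rw [mul_pow, mul_comm (P ^ k), pow_succ, ← Ideal.mul_sup, hQP, Ideal.mul_top]

theorem exists_algebraMap_sub_mem_mul_of_mem_map {I : Ideal A} {J : Ideal R}
    (hIJ : I.map (algebraMap A R) ≤ J) (hQ : Function.Surjective (algebraMap A (R ⧸ Q)))
    {y : R} (hy : y ∈ I.map (algebraMap A R)) : ∃ a : A, y - algebraMap A R a ∈ J * Q := by
  rw [← Submodule.restrictScalars_mem A, ← Ideal.smul_top_eq_map] at hy
  refine Submodule.smul_induction_on (p := fun z ↦ ∃ a : A, z - algebraMap A R a ∈ J * Q) hy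
    (fun x hx b _ ↦ ?_) fun y z ⟨a, ha⟩ ⟨c, hc⟩ ↦ ?_
  · obtain ⟨c, hc⟩ := hQ (Ideal.Quotient.mk Q b)
    refine ⟨x * c, ?_⟩
    rw [Algebra.smul_def, map_mul, ← mul_sub]
    exact Ideal.mul_mem_mul (hIJ (Ideal.mem_map_of_mem _ hx)) (Ideal.Quotient.eq.mp hc.symm)
  · refine ⟨a + c, ?_⟩
    rw [map_add, add_sub_add_comm]
    exact add_mem ha hc

theorem algebraMap_quotient_pow_surjective (hPQ : IsCoprime P Q)
    (hsplit : p.map (algebraMap A R) = P * Q)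
    (hQ : Function.Surjective (algebraMap A (R ⧸ Q))) (k : ℕ) :
    Function.Surjective (algebraMap A (R ⧸ Q ^ k)) := by
  suffices ∀ b : R, ∃ a : A, b - algebraMap A R a ∈ Q ^ k by
    intro b
    obtain ⟨b, rfl⟩ := Ideal.Quotient.mk_surjective b
    obtain ⟨a, ha⟩ := this b
    exact ⟨a, (Ideal.Quotient.eq.mpr ha).symm⟩
  induction k with
  | zero => exact fun b ↦ ⟨0, by simp⟩
  | succ k ih =>
    intro b
    obtain ⟨a, ha⟩ := ih b
    rw [← pow_succ_sup_mul_pow_eq_pow hPQ, ← hsplit, ← Ideal.map_pow] at ha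
    obtain ⟨x, hx, y, hy, hxy⟩ := Submodule.mem_sup.mp ha
    have hpQ : (p ^ k).map (algebraMap A R) ≤ Q ^ k := by
      rw [Ideal.map_pow, hsplit]
      exact Ideal.pow_right_mono Ideal.mul_le_right k
    obtain ⟨c, hc⟩ := exists_algebraMap_sub_mem_mul_of_mem_map hpQ hQ hy
    refine ⟨a + c, ?_⟩
    have : b - algebraMap A R (a + c) = x + (y - algebraMap A R c) := by
      rw [map_add]
      linear_combination -hxy
    rw [this]
    exact add_mem hx (pow_succ Q k ▸ hc)

theorem isUnit_mk_map_pow_algebraMap [p.IsMaximal] {a : A} (ha : a ∉ p) (r : ℕ) :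
    IsUnit (Ideal.Quotient.mk (p.map (algebraMap A R) ^ r) (algebraMap A R a)) := by
  have h := (Ideal.Quotient.isUnit_mk_pow_of_notMem p (n := r) ha).map
    (Ideal.quotientMap _ (algebraMap A R) Ideal.le_comap_map)
  rwa [Ideal.quotientMap_mk, Ideal.map_pow] at h

theorem exists_isUnit_algebraMap_sub_mem_pow [p.IsMaximal] (hPQ : IsCoprime P Q)
    (hsplit : p.map (algebraMap A R) = P * Q)
    (hQ : Function.Surjective (algebraMap A (R ⧸ Q))) {r : ℕ} {b : R}
    (hb : IsUnit (Ideal.Quotient.mk (p.map (algebraMap A R) ^ r) b)) :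
    ∃ a : A, IsUnit (Ideal.Quotient.mk (p.map (algebraMap A R) ^ r) (algebraMap A R a)) ∧
      b - algebraMap A R a ∈ Q ^ r := by
  rcases eq_or_ne (Q ^ r) ⊤ with hQr | hQr
  · exact ⟨1, by simp, by simp [hQr]⟩
  have hpQ : p.map (algebraMap A R) ≤ Q := hsplit.trans_le Ideal.mul_le_right
  have hr : r ≠ 0 := by
    rintro rfl
    exact hQr (by simp)
  obtain ⟨a, ha⟩ := algebraMap_quotient_pow_surjective hPQ hsplit hQ r (Ideal.Quotient.mk _ b)
  have hba : b - algebraMap A R a ∈ Q ^ r := Ideal.Quotient.eq.mp ha.symm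
  refine ⟨a, isUnit_mk_map_pow_algebraMap (fun hap ↦ hQr ?_) r, hba⟩
  have hbQ : b ∈ Q := by
    rw [← sub_add_cancel b (algebraMap A R a)]
    exact add_mem (Ideal.pow_le_self hr hba) (hpQ (Ideal.mem_map_of_mem _ hap))
  have h0 := hb.map (Ideal.Quotient.factor ((Ideal.pow_le_self hr).trans hpQ))
  rw [Ideal.Quotient.factor_mk, Ideal.Quotient.eq_zero_iff_mem.mpr hbQ, isUnit_zero_iff] at h0
  have hQ_top : Q = ⊤ := (Ideal.eq_top_iff_one Q).mpr (Ideal.Quotient.eq_zero_iff_mem.mp h0.symm)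
  rw [hQ_top, Ideal.top_pow]

theorem HasModulus.le_of_ne_one {M : Type*} [CommMonoidWithZero M] [p.IsMaximal] [P.IsMaximal]
    (hPQ : IsCoprime P Q) (hsplit : p.map (algebraMap A R) = P * Q)
    (hQ : Function.Surjective (algebraMap A (R ⧸ Q))) {r : ℕ}
    {χ : MulChar (R ⧸ p.map (algebraMap A R) ^ r) M} (hχ : χ ≠ 1)
    (htriv : ∀ a : A, IsUnit (Ideal.Quotient.mk (p.map (algebraMap A R) ^ r) (algebraMap A R a)) →
      χ (Ideal.Quotient.mk (p.map (algebraMap A R) ^ r) (algebraMap A R a)) = 1)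
    {m : Ideal R} (hm : HasModulus χ m) : m ≤ P := by
  by_contra hmP
  have hPm : P ^ r ⊔ m = ⊤ :=
    Ideal.pow_sup_eq_top (Ideal.IsMaximal.out.2 _ (left_lt_sup.mpr hmP))
  have hQr : HasModulus χ (Q ^ r) := hm.of_le_sup <| calc
    Q ^ r = (m ⊔ P ^ r) * Q ^ r := by rw [sup_comm, hPm, Ideal.top_mul]
    _ = m * Q ^ r ⊔ P ^ r * Q ^ r := Ideal.sup_mul ..
    _ ≤ m ⊔ p.map (algebraMap A R) ^ r := by
      rw [hsplit, mul_pow]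
      exact sup_le_sup_right Ideal.mul_le_left _
  refine hχ (MulChar.ext fun u ↦ ?_)
  obtain ⟨b, hb⟩ := Ideal.Quotient.mk_surjective (u : R ⧸ p.map (algebraMap A R) ^ r)
  have hb_unit := hb ▸ u.isUnit
  obtain ⟨a, ha_unit, hba⟩ := exists_isUnit_algebraMap_sub_mem_pow hPQ hsplit hQ hb_unit
  rw [MulChar.one_apply_coe, ← hb, hQr.apply_eq_of_sub_mem hb_unit ha_unit hba, htriv a ha_unit]

end Splitting

theorem intCast_surjective_of_card_prime {S : Type*} [Ring S] (hS : (Nat.card S).Prime) :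
    Function.Surjective (Int.cast : ℤ → S) := by
  have : Fact (Nat.card S).Prime := ⟨hS⟩
  have : Finite S := Nat.finite_of_card_ne_zero hS.ne_zero
  have : Nontrivial S := Finite.one_lt_card_iff_nontrivial.mp hS.one_lt
  intro a
  obtain ⟨n, hn⟩ := AddSubgroup.mem_zmultiples_iff.mp
    (mem_zmultiples_of_prime_card rfl (one_ne_zero (α := S)) (g' := a))
  exact ⟨n, by rw [← hn, zsmul_one]⟩

section QuadraticField

variable {K : Type*} [Field K] [NumberField K] {p : ℕ} {P Q : Ideal (𝓞 K)}

theorem absNorm_right_eq_of_span_natCast_eq_mul (h2 : Module.finrank ℚ K = 2) (hp : p.Prime)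
    (hP : P ≠ ⊤) (hQ : Q ≠ ⊤) (hsplit : Ideal.span {(p : 𝓞 K)} = P * Q) :
    Ideal.absNorm Q = p := by
  have hnorm : Ideal.absNorm P * Ideal.absNorm Q = p ^ 2 := by
    rw [← map_mul, ← hsplit, Ideal.absNorm_span_natCast, RingOfIntegers.rank, h2]
  exact ((hp.mul_eq_prime_sq_iff (mt Ideal.absNorm_eq_one_iff.mp hP)
    (mt Ideal.absNorm_eq_one_iff.mp hQ)).mp hnorm).2

theorem dvd_charConductor (h2 : Module.finrank ℚ K = 2) (hp : p.Prime) (hP : P.IsPrime)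
    (hQ : Q.IsPrime) (hPQ : P ≠ Q) (hsplit : Ideal.span {(p : 𝓞 K)} = P * Q) {r : ℕ}
    {g : Ideal (𝓞 K)} (hg : g = Ideal.span {(p : 𝓞 K) ^ r}) {χ : MulChar (𝓞 K ⧸ g) ℂ} (hχ : χ ≠ 1)
    (htriv : ∀ n : ℤ, IsUnit (Ideal.Quotient.mk g (n : 𝓞 K)) →
      χ (Ideal.Quotient.mk g (n : 𝓞 K)) = 1) :
    P ∣ charConductor K g χ := by
  have hPQ_ne_bot : P * Q ≠ ⊥ := by
    simpa [← hsplit] using hp.ne_zero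
  have hP_max : P.IsMaximal := hP.isMaximal (left_ne_zero_of_mul hPQ_ne_bot)
  have hQ_max : Q.IsMaximal := hQ.isMaximal (right_ne_zero_of_mul hPQ_ne_bot)
  have hp_max : (Ideal.span {(p : ℤ)}).IsMaximal :=
    PrincipalIdealRing.isMaximal_of_irreducible (Nat.prime_iff_prime_int.mp hp).irreducible
  have hmap : (Ideal.span {(p : ℤ)}).map (algebraMap ℤ (𝓞 K)) = Ideal.span {(p : 𝓞 K)} := by
    simp [Ideal.map_span]
  obtain rfl : g = (Ideal.span {(p : ℤ)}).map (algebraMap ℤ (𝓞 K)) ^ r := by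
    rw [hg, hmap, Ideal.span_singleton_pow]
  have hcard : Nat.card (𝓞 K ⧸ Q) = p :=
    absNorm_right_eq_of_span_natCast_eq_mul h2 hp hP.ne_top hQ.ne_top hsplit
  rw [Ideal.dvd_iff_le]
  exact sSup_le fun m ⟨_, (hm : HasModulus χ m)⟩ ↦ hm.le_of_ne_one
    (Ideal.isCoprime_of_isMaximal hPQ) (hmap.trans hsplit)
    (intCast_surjective_of_card_prime (hcard ▸ hp)) hχ htriv

end QuadraticField

theorem conductor_divisible_by_both_primes_general (K : Type*) [Field K] [NumberField K]
    (h2 : Module.finrank ℚ K = 2)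
    (p : ℕ) (hp : p.Prime) (P Q : Ideal (𝓞 K)) (hP : P.IsPrime) (hQ : Q.IsPrime)
    (hPQ : P ≠ Q) (hsplit : Ideal.span {(p : 𝓞 K)} = P * Q)
    (r : ℕ) (g : Ideal (𝓞 K)) (hg : g = Ideal.span {(p : 𝓞 K) ^ r})
    (χ : MulChar (𝓞 K ⧸ g) ℂ) (hχ : χ ≠ 1)
    (htriv : ∀ n : ℤ, IsUnit (Ideal.Quotient.mk g (n : 𝓞 K)) →
      χ (Ideal.Quotient.mk g (n : 𝓞 K)) = 1) :
    P ∣ charConductor K g χ ∧ Q ∣ charConductor K g χ :=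
  ⟨dvd_charConductor h2 hp hP hQ hPQ hsplit hg hχ htriv,
    dvd_charConductor h2 hp hQ hP hPQ.symm (hsplit.trans (mul_comm P Q)) hg hχ htriv⟩

theorem conductor_divisible_by_both_primes (K : Type*) [Field K] [NumberField K]
    (h2 : Module.finrank ℚ K = 2)
    (him : ∀ v : InfinitePlace K, v.IsComplex)
    (p : ℕ) (hp : p.Prime) (P Q : Ideal (𝓞 K)) (hP : P.IsPrime) (hQ : Q.IsPrime)
    (hPQ : P ≠ Q) (hsplit : Ideal.span {(p : 𝓞 K)} = P * Q)
    (r : ℕ) (hr : 1 ≤ r) (g : Ideal (𝓞 K)) (hg : g = Ideal.span {(p : 𝓞 K) ^ r})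
    (χ : MulChar (𝓞 K ⧸ g) ℂ) (hχ : χ ≠ 1)
    (htriv : ∀ n : ℤ, IsUnit (Ideal.Quotient.mk g (n : 𝓞 K)) → χ (Ideal.Quotient.mk g (n : 𝓞 K)) = 1) :
    P ∣ charConductor K g χ ∧ Q ∣ charConductor K g χ :=
  conductor_divisible_by_both_primes_general K h2 p hp P Q hP hQ hPQ hsplit r g hg χ hχ htriv
end

section
/- Let K be an imaginary quadratic field of discriminant d_K, p a prime, r ≥ 1, 𝔤 = p^r O_K, and π_𝔤 : O_K → O_K/𝔤 the projection. Then the subgroup π_𝔤(O_K^×)·π_𝔤(Z)^× of (O_K/𝔤)^× has order (|O_K^×|/2) · p^{r-1} (p-1). -/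
open NumberField

/-- The subgroup `π_𝔤(O_K^×)·π_𝔤(ℤ)^×` of `(O_K/𝔤)^×`: generated by the images of the
units of `O_K` and the images of rational integers (that are units mod `𝔤`). -/
def unitsIntSubgroup (K : Type*) [Field K] [NumberField K] (g : Ideal (𝓞 K)) :
    Subgroup (𝓞 K ⧸ g)ˣ :=
  Subgroup.closure
    (Set.range (Units.map (Ideal.Quotient.mk g : 𝓞 K →+* 𝓞 K ⧸ g).toMonoidHom) ∪
      {u : (𝓞 K ⧸ g)ˣ | ∃ n : ℤ, (u : 𝓞 K ⧸ g) = Ideal.Quotient.mk g (n : 𝓞 K)})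

/-!
A root of unity `u` congruent to a rational integer modulo `m > 2` is `±1`. Indeed, if
`u = n + m x`, then under every complex embedding `u - u⁻¹ = u - conj u = m (x - conj x)`, so
`y = (u - u⁻¹) / m` is an algebraic integer; all its conjugates have absolute value at most
`2 / m < 1`, whence `y = 0`. Thus, when all units have finite order, the multiplication map
`(O_K)ˣ × (ℤ/m)ˣ → (O_K/m)ˣ` has kernel `{±(1, 1)}`.
-/

open NumberField.Units

section FiniteUnits

variable {K : Type*} [Field K] [NumberField K]

lemma units_rank_eq_zero_of_finrank_eq_two [IsTotallyComplex K] (h2 : Module.finrank ℚ K = 2) :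
    rank K = 0 := by
  have hplaces : 2 = 2 * InfinitePlace.nrComplexPlaces K := h2 ▸ IsTotallyComplex.finrank K
  rw [rank, InfinitePlace.card_eq_nrRealPlaces_add_nrComplexPlaces,
    IsTotallyComplex.nrRealPlaces_eq_zero]
  lia

lemma finite_units_of_units_rank_eq_zero (hK : rank K = 0) : Finite (𝓞 K)ˣ := by
  have : IsEmpty (Fin (rank K)) := by rw [hK]; infer_instance
  have htorsion : torsion K = ⊤ := by
    rw [← closure_fundSystem_sup_torsion_eq_top K, Set.range_eq_empty, Subgroup.closure_empty,
      bot_sup_eq]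
  exact Finite.of_equiv _ ((MulEquiv.subgroupCongr htorsion).trans Subgroup.topEquiv).toEquiv

end FiniteUnits

section RootsOfUnity

variable {K : Type*} [Field K] [NumberField K]

lemma norm_embedding_of_mem_torsion {u : (𝓞 K)ˣ} (hu : u ∈ torsion K) (φ : K →+* ℂ) :
    ‖φ u‖ = 1 :=
  (InfinitePlace.eq_iff_eq (u : K) 1).mp ((mem_torsion K).mp hu) φ

lemma embedding_inv_of_mem_torsion {u : (𝓞 K)ˣ} (hu : u ∈ torsion K) (φ : K →+* ℂ) :
    φ (u⁻¹ : (𝓞 K)ˣ) = starRingEnd ℂ (φ u) := by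
  rw [← Complex.inv_eq_conj (norm_embedding_of_mem_torsion hu φ), ← map_inv₀]
  simp

lemma natCast_dvd_sub_inv_of_dvd_sub_intCast {u : (𝓞 K)ˣ} (hu : u ∈ torsion K) {m : ℕ}
    (hm : m ≠ 0) {n : ℤ} (h : (m : 𝓞 K) ∣ u - n) : (m : 𝓞 K) ∣ u - (u⁻¹ : (𝓞 K)ˣ) := by
  obtain ⟨x, hx⟩ := h
  have hm' : (m : K) ≠ 0 := Nat.cast_ne_zero.mpr hm
  have hu_eq : (u : K) = n + m * x := by
    simpa [sub_eq_iff_eq_add'] using congrArg (algebraMap (𝓞 K) K) hx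
  obtain ⟨φ⟩ : Nonempty (K →+* ℂ) := inferInstance
  set y : K := (u - (u⁻¹ : (𝓞 K)ˣ)) / m with hy
  have hφy : φ y = φ x - starRingEnd ℂ (φ x) := by
    rw [hy, map_div₀, map_sub, embedding_inv_of_mem_torsion hu, map_natCast,
      div_eq_iff (Nat.cast_ne_zero.mpr hm), hu_eq]
    simp only [map_add, map_mul, map_intCast, map_natCast]
    ring
  have hφx : IsIntegral ℤ (φ x) := x.isIntegral_coe.map φ.toIntAlgHom
  have hy_int : IsIntegral ℤ y := by
    rw [← isIntegral_algHom_iff φ.toIntAlgHom φ.injective]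
    exact hφy ▸ hφx.sub (hφx.map (starRingEnd ℂ).toIntAlgHom)
  obtain ⟨z, hz⟩ := (IsIntegralClosure.isIntegral_iff (A := 𝓞 K)).mp hy_int
  refine ⟨z, RingOfIntegers.coe_injective ?_⟩
  rw [map_sub, map_mul, map_natCast, hz, hy, mul_div_cancel₀ _ hm']

lemma eq_zero_of_natCast_dvd_of_norm_lt {m : ℕ} {a : 𝓞 K} (hdvd : (m : 𝓞 K) ∣ a)
    (hlt : ∀ φ : K →+* ℂ, ‖φ a‖ < m) : a = 0 := by
  obtain ⟨y, rfl⟩ := hdvd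
  by_contra hne
  obtain ⟨φ, hφ⟩ := exists_conjugate_one_le_norm (right_ne_zero_of_mul hne)
  refine (hlt φ).not_ge ?_
  simpa using le_mul_of_one_le_right (Nat.cast_nonneg m) hφ

theorem eq_one_or_neg_one_of_natCast_dvd_sub_intCast {u : (𝓞 K)ˣ} (hu : u ∈ torsion K) {m : ℕ}
    (hm : 2 < m) {n : ℤ} (h : (m : 𝓞 K) ∣ u - n) : u = 1 ∨ u = -1 := by
  have hlt (φ : K →+* ℂ) : ‖φ ((u - (u⁻¹ : (𝓞 K)ˣ) : 𝓞 K) : K)‖ < m :=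
    calc ‖φ ((u - (u⁻¹ : (𝓞 K)ˣ) : 𝓞 K) : K)‖
      _ = ‖φ u - φ (u⁻¹ : (𝓞 K)ˣ)‖ := by simp
      _ ≤ ‖φ u‖ + ‖φ (u⁻¹ : (𝓞 K)ˣ)‖ := norm_sub_le _ _
      _ = 2 := by
        rw [norm_embedding_of_mem_torsion hu, norm_embedding_of_mem_torsion (inv_mem hu),
          one_add_one_eq_two]
      _ < m := mod_cast hm
  have hsub : (u : 𝓞 K) - (u⁻¹ : (𝓞 K)ˣ) = 0 :=
    eq_zero_of_natCast_dvd_of_norm_lt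
      (natCast_dvd_sub_inv_of_dvd_sub_intCast hu (by lia) h) hlt
  exact (Units.inv_eq_self_iff u).mp (Units.ext (sub_eq_zero.mp hsub).symm)

end RootsOfUnity

section CharP

lemma charP_quotient_span_natCast (R : Type*) [CommRing R] [Module.FaithfullyFlat ℤ R] (m : ℕ) :
    CharP (R ⧸ Ideal.span {(m : R)}) m := by
  refine ⟨fun k ↦ ?_⟩
  have hspan : Ideal.span {(m : R)} = (Ideal.span {(m : ℤ)}).map (algebraMap ℤ R) := by
    simp [Ideal.map_span]
  have hk : (k : R) = algebraMap ℤ R k := by simp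
  rw [← map_natCast (Ideal.Quotient.mk _) k, Ideal.Quotient.eq_zero_iff_mem, hspan, hk,
    ← Ideal.mem_comap, Ideal.comap_map_eq_self_of_faithfullyFlat, Ideal.mem_span_singleton,
    Int.natCast_dvd_natCast]

lemma coe_range_units_map_castHom (A : Type*) [CommRing A] (m : ℕ) [NeZero m] [CharP A m] :
    ((Units.map (ZMod.castHom (dvd_refl m) A : ZMod m →* A)).range : Set Aˣ) =
      {u : Aˣ | ∃ n : ℤ, (u : A) = n} := by
  ext u
  constructor
  · rintro ⟨z, rfl⟩
    obtain ⟨n, hn⟩ := ZMod.intCast_surjective (z : ZMod m)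
    exact ⟨n, by simp [← hn]⟩
  · rintro ⟨n, hn⟩
    have hcast : ZMod.castHom (dvd_refl m) A n = u := by simp [hn]
    have hunit : IsUnit (n : ZMod m) := by
      rw [isUnit_iff_mem_nonZeroDivisors_of_finite]
      refine mem_nonZeroDivisors_of_injective (ZMod.castHom_injective A) ?_
      exact hcast ▸ u.isUnit.mem_nonZeroDivisors
    exact ⟨hunit.unit, Units.ext hcast⟩

end CharP

lemma orderOf_units_neg_one (R : Type*) [Ring R] [CharZero R] : orderOf (-1 : Rˣ) = 2 := by
  have := (Nat.cast_injective (R := R)).nontrivial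
  rw [← orderOf_units, Units.coe_neg_one, orderOf_neg_one, ringChar.eq_zero,
    if_neg (OfNat.zero_ne_ofNat 2)]

section UnitsIntHom

lemma range_coprod_eq_sup {M N P : Type*} [Group M] [Group N] [CommGroup P] (f : M →* P)
    (g : N →* P) : (f.coprod g).range = f.range ⊔ g.range :=
  MonoidHom.noncommCoprod_range f g fun _ _ ↦ Commute.all _ _

/-- The homomorphism `(u, a) ↦ π_𝔤(u) · a` from `(O_K)ˣ × (ℤ/m)ˣ` to `(O_K/𝔤)ˣ`, where `m` is the
characteristic of `O_K/𝔤`; its image is `unitsIntSubgroup K 𝔤`. -/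
def unitsIntHom {K : Type*} [Field K] (g : Ideal (𝓞 K)) (m : ℕ) [CharP (𝓞 K ⧸ g) m] :
    (𝓞 K)ˣ × (ZMod m)ˣ →* (𝓞 K ⧸ g)ˣ :=
  (Units.map (Ideal.Quotient.mk g).toMonoidHom).coprod
    (Units.map (ZMod.castHom (dvd_refl m) (𝓞 K ⧸ g) : ZMod m →* 𝓞 K ⧸ g))

variable {K : Type*} [Field K] {m : ℕ}

lemma coe_unitsIntHom_apply {g : Ideal (𝓞 K)} [CharP (𝓞 K ⧸ g) m] (u : (𝓞 K)ˣ)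
    (a : (ZMod m)ˣ) :
    (unitsIntHom g m (u, a) : 𝓞 K ⧸ g) =
      Ideal.Quotient.mk g u * ZMod.castHom (dvd_refl m) (𝓞 K ⧸ g) a :=
  rfl

lemma unitsIntHom_neg_one {g : Ideal (𝓞 K)} [CharP (𝓞 K ⧸ g) m] :
    unitsIntHom g m (-1, -1) = 1 := by
  ext
  rw [coe_unitsIntHom_apply]
  simp

lemma unitsIntHom_right_injective {g : Ideal (𝓞 K)} [CharP (𝓞 K ⧸ g) m] (u : (𝓞 K)ˣ) :
    Function.Injective fun a ↦ unitsIntHom g m (u, a) := fun _ _ h ↦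
  Units.map_injective (ZMod.castHom_injective (𝓞 K ⧸ g)) (mul_left_cancel h)

lemma exists_intCast_sub_mem_of_unitsIntHom_eq_one {g : Ideal (𝓞 K)} [CharP (𝓞 K ⧸ g) m]
    {u : (𝓞 K)ˣ} {a : (ZMod m)ˣ} (h : unitsIntHom g m (u, a) = 1) :
    ∃ n : ℤ, (u : 𝓞 K) - n ∈ g := by
  obtain ⟨n, hn⟩ := ZMod.intCast_surjective ((a⁻¹ : (ZMod m)ˣ) : ZMod m)
  have hu : Units.map (Ideal.Quotient.mk g).toMonoidHom u =
      Units.map (ZMod.castHom (dvd_refl m) (𝓞 K ⧸ g) : ZMod m →* 𝓞 K ⧸ g) a⁻¹ := by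
    rw [map_inv]
    exact eq_inv_of_mul_eq_one_left h
  refine ⟨n, Ideal.Quotient.eq.mp ?_⟩
  calc Ideal.Quotient.mk g u
    _ = ZMod.castHom (dvd_refl m) (𝓞 K ⧸ g) ((a⁻¹ : (ZMod m)ˣ) : ZMod m) := congrArg Units.val hu
    _ = Ideal.Quotient.mk g n := by rw [← hn, map_intCast, map_intCast]

variable [NumberField K]

theorem range_unitsIntHom (g : Ideal (𝓞 K)) [NeZero m] [CharP (𝓞 K ⧸ g) m] :
    (unitsIntHom g m).range = unitsIntSubgroup K g := by
  simp only [unitsIntSubgroup, map_intCast, ← coe_range_units_map_castHom (𝓞 K ⧸ g) m,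
    ← MonoidHom.coe_range, Subgroup.closure_union, Subgroup.closure_eq]
  exact range_coprod_eq_sup _ _

theorem ker_unitsIntHom [Finite (𝓞 K)ˣ] (hm : 2 < m)
    [CharP (𝓞 K ⧸ Ideal.span {(m : 𝓞 K)}) m] :
    (unitsIntHom (Ideal.span {(m : 𝓞 K)}) m).ker = Subgroup.zpowers (-1) := by
  refine le_antisymm ?_ (Subgroup.zpowers_le.mpr unitsIntHom_neg_one)
  rintro ⟨u, a⟩ h
  obtain ⟨n, hn⟩ := exists_intCast_sub_mem_of_unitsIntHom_eq_one h
  rcases eq_one_or_neg_one_of_natCast_dvd_sub_intCast (isOfFinOrder_of_finite u) hm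
    (Ideal.mem_span_singleton.mp hn) with rfl | rfl
  · obtain rfl : a = 1 := unitsIntHom_right_injective 1 (h.trans (map_one _).symm)
    exact one_mem _
  · obtain rfl : a = -1 := unitsIntHom_right_injective (-1) (h.trans unitsIntHom_neg_one.symm)
    exact Subgroup.mem_zpowers _

lemma card_ker_unitsIntHom [Finite (𝓞 K)ˣ] (hm : 2 < m)
    [CharP (𝓞 K ⧸ Ideal.span {(m : 𝓞 K)}) m] :
    Nat.card (unitsIntHom (Ideal.span {(m : 𝓞 K)}) m).ker = 2 := by
  have hdvd : orderOf (-1 : (ZMod m)ˣ) ∣ 2 := orderOf_dvd_of_pow_eq_one neg_one_sq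
  rw [ker_unitsIntHom hm, Nat.card_zpowers, Prod.orderOf, Prod.fst_neg, Prod.snd_neg, Prod.fst_one,
    Prod.snd_one, orderOf_units_neg_one, Nat.lcm_eq_left hdvd]

end UnitsIntHom

theorem card_units_int_subgroup_general (K : Type*) [Field K] [NumberField K] [Finite (𝓞 K)ˣ]
    {m : ℕ} (hm : 2 < m) :
    Nat.card (unitsIntSubgroup K (Ideal.span {(m : 𝓞 K)})) =
      Nat.card (𝓞 K)ˣ / 2 * m.totient := by
  have : NeZero m := ⟨by lia⟩
  have := charP_quotient_span_natCast (𝓞 K) m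
  have heven : 2 ∣ Nat.card (𝓞 K)ˣ := orderOf_units_neg_one (𝓞 K) ▸ orderOf_dvd_natCard _
  have hcard := (unitsIntHom (Ideal.span {(m : 𝓞 K)}) m).ker.card_mul_index
  rw [Subgroup.index_ker, range_unitsIntHom, card_ker_unitsIntHom hm, Nat.card_prod,
    Nat.card_eq_fintype_card (α := (ZMod m)ˣ), ZMod.card_units_eq_totient] at hcard
  rw [Nat.div_mul_right_comm heven, ← hcard, Nat.mul_div_cancel_left _ two_pos]

theorem card_units_int_subgroup (K : Type*) [Field K] [NumberField K]
    (h2 : Module.finrank ℚ K = 2)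
    (him : ∀ v : InfinitePlace K, v.IsComplex)
    (p : ℕ) (hp : p.Prime) (r : ℕ) (hr : 1 ≤ r) (hpr : 2 < p ^ r)
    (g : Ideal (𝓞 K)) (hg : g = Ideal.span {(p : 𝓞 K) ^ r}) :
    Nat.card (unitsIntSubgroup K g)
      = (Nat.card (𝓞 K)ˣ / 2) * p ^ (r - 1) * (p - 1) := by
  have : IsTotallyComplex K := ⟨him⟩
  have := finite_units_of_units_rank_eq_zero (units_rank_eq_zero_of_finrank_eq_two h2)
  rw [hg, ← Nat.cast_pow, card_units_int_subgroup_general K hpr, Nat.totient_prime_pow hp hr,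
    mul_assoc]
end
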